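/- Every compatible subset of the set Ψ(Q)_{≥−1} of almost positive real Schur roots of Q is linearly independent over ℚ; in particular, every compatible subset has at most |Q_0| elements. -/

import Mathlib

set_option autoImplicit false

noncomputable section

open scoped BigOperators

/-! Basic setup for representations of a quiver with vertex set `V`, arrow set `A`,
tail map `t` and head map `h`, over a field `K`. -/

variable (K : Type) [Field K]
variable {V A : Type} [Fintype V] [DecidableEq V] [Fintype A]

/-- The Euler form of the quiver `(V, A, t, h)`. -/
def eulerForm {R : Type} [CommRing R] (t h : A → V) (x y : V → R) : R :=
  ∑ i, x i * y i - ∑ a, x (t a) * y (h a)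

def natZ (x : V → ℕ) : V → ℤ := fun i => (x i : ℤ)
def intQ (x : V → ℤ) : V → ℚ := fun i => (x i : ℚ)
def natQ (x : V → ℕ) : V → ℚ := fun i => (x i : ℚ)

/-- The weight `⟨α,·⟩`. -/
def weightL (t h : A → V) (α : V → ℤ) : V → ℤ :=
  fun i => eulerForm t h α (fun j => if j = i then 1 else 0)

/-- The weight `−⟨·,α⟩`. -/
def weightR (t h : A → V) (α : V → ℤ) : V → ℤ :=
  fun i => - eulerForm t h (fun j => if j = i then 1 else 0) α

/-- `IsPathFrom t h i p j` : the list of arrows `p` is a path from `i` to `j`. -/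
def IsPathFrom (t h : A → V) : V → List A → V → Prop
  | i, [], j => i = j
  | i, a :: p, j => t a = i ∧ IsPathFrom t h (h a) p j

/-- The quiver has no (nontrivial) oriented cycles. -/
def Acyclic (t h : A → V) : Prop := ∀ (i : V) (p : List A), IsPathFrom t h i p i → p = []

/-- The dimension vector `γ_i` of the projective indecomposable at `i`:
`γ_i(j)` is the number of paths from `i` to `j`. -/
def gammaRoot (t h : A → V) (i : V) : V → ℕ :=
  fun j => Set.ncard {p : List A | IsPathFrom t h i p j}

/-- A finite-dimensional representation of the quiver `(V, A, t, h)` over `K`. -/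
structure QuivRep (K : Type) [Field K] (V A : Type) (t h : A → V) : Type 1 where
  sp : V → Type
  [inst1 : ∀ i, AddCommGroup (sp i)]
  [inst2 : ∀ i, Module K (sp i)]
  [inst3 : ∀ i, FiniteDimensional K (sp i)]
  map : ∀ a : A, sp (t a) →ₗ[K] sp (h a)

attribute [instance] QuivRep.inst1 QuivRep.inst2 QuivRep.inst3

namespace QuivRep

variable {K} {t h : A → V}

/-- The dimension vector of a representation. -/
def dimVec (X : QuivRep K V A t h) : V → ℕ := fun i => Module.finrank K (X.sp i)

/-- A subrepresentation. -/
structure Sub (X : QuivRep K V A t h) where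
  sub : ∀ i, Submodule K (X.sp i)
  le : ∀ a : A, ∀ x ∈ sub (t a), X.map a x ∈ sub (h a)

/-- The dimension vector of a subrepresentation. -/
def Sub.dimVec {X : QuivRep K V A t h} (U : Sub X) : V → ℕ :=
  fun i => Module.finrank K (U.sub i)

/-- The space `Hom_Q(X,Y)` of morphisms of representations, as a submodule of
`Π i, Hom_K(X(i),Y(i))`. -/
def homS (X Y : QuivRep K V A t h) : Submodule K (∀ i, X.sp i →ₗ[K] Y.sp i) where
  carrier := {φ | ∀ a : A, (φ (h a)).comp (X.map a) = (Y.map a).comp (φ (t a))}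
  zero_mem' := by intro a; simp
  add_mem' := by
    intro f g hf hg a
    simp only [Pi.add_apply, LinearMap.add_comp, LinearMap.comp_add, hf a, hg a]
  smul_mem' := by
    intro c f hf a
    simp only [Pi.smul_apply, LinearMap.smul_comp, LinearMap.comp_smul, hf a]

/-- The dimension of `Hom_Q(X,Y)`. -/
def homDim (X Y : QuivRep K V A t h) : ℕ := Module.finrank K (homS X Y)

/-- The map `d^X_Y` from Ringel's canonical exact sequence. -/
def dmap (X Y : QuivRep K V A t h) :
    (∀ i, X.sp i →ₗ[K] Y.sp i) →ₗ[K] (∀ a : A, X.sp (t a) →ₗ[K] Y.sp (h a)) where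
  toFun φ := fun a => (φ (h a)).comp (X.map a) - (Y.map a).comp (φ (t a))
  map_add' f g := by
    funext a
    simp only [Pi.add_apply, LinearMap.add_comp, LinearMap.comp_add]
    abel
  map_smul' c f := by
    funext a
    simp only [Pi.smul_apply, LinearMap.smul_comp, LinearMap.comp_smul, smul_sub,
      RingHom.id_apply]

/-- The dimension of `Ext^1_Q(X,Y)`, i.e. of the cokernel of `d^X_Y`. -/
def extDim (X Y : QuivRep K V A t h) : ℕ :=
  Module.finrank K ((∀ a : A, X.sp (t a) →ₗ[K] Y.sp (h a)) ⧸ LinearMap.range (dmap X Y))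

/-- A rigid representation: `Ext^1_Q(X,X) = 0`. -/
def IsRigid (X : QuivRep K V A t h) : Prop := extDim X X = 0

/-- A Schur representation: `End_Q(X) = K·id`. -/
def IsSchur (X : QuivRep K V A t h) : Prop := homDim X X = 1

/-- An exceptional representation: rigid and Schur. -/
def IsExceptional (X : QuivRep K V A t h) : Prop := IsRigid X ∧ IsSchur X

end QuivRep

/-- `β` is a real Schur root: the dimension vector of an exceptional representation. -/
def isRealSchurRoot (t h : A → V) (β : V → ℕ) : Prop :=
  ∃ X : QuivRep K V A t h, X.dimVec = β ∧ X.IsExceptional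

/-- `ext_Q(α,β)` : the generic (minimal) value of `dim Ext^1_Q` on pairs of
representations of dimension vectors `α`, `β`. -/
def extMin (t h : A → V) (α β : V → ℕ) : ℕ :=
  sInf {n | ∃ X Y : QuivRep K V A t h, X.dimVec = α ∧ Y.dimVec = β ∧ QuivRep.extDim X Y = n}

/-- `hom_Q(α,β)` : the generic (minimal) value of `dim Hom_Q`. -/
def homMin (t h : A → V) (α β : V → ℕ) : ℕ :=
  sInf {n | ∃ X Y : QuivRep K V A t h, X.dimVec = α ∧ Y.dimVec = β ∧ QuivRep.homDim X Y = n}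

/-- `β' ↪ β` : every representation of dimension vector `β` has a subrepresentation of
dimension vector `β'`. -/
def Embeds (t h : A → V) (β' β : V → ℕ) : Prop :=
  ∀ X : QuivRep K V A t h, X.dimVec = β → ∃ U : QuivRep.Sub X, U.dimVec = β'

/-- `σ`-semi-stability of a representation. -/
def IsSemistable {t h : A → V} (σ : V → ℤ) (X : QuivRep K V A t h) : Prop :=
  (∑ i, σ i * (X.dimVec i : ℤ)) = 0 ∧
  ∀ U : QuivRep.Sub X, (∑ i, σ i * (U.dimVec i : ℤ)) ≤ 0

/-- `σ`-stability of a representation. -/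
def IsStable {t h : A → V} (σ : V → ℤ) (X : QuivRep K V A t h) : Prop :=
  (∑ i, σ i * (X.dimVec i : ℤ)) = 0 ∧ X.dimVec ≠ (fun _ => 0) ∧
  ∀ U : QuivRep.Sub X, U.dimVec ≠ (fun _ => 0) → U.dimVec ≠ X.dimVec →
    (∑ i, σ i * (U.dimVec i : ℤ)) < 0

/-- Isomorphism of representations. -/
def RepIso {t h : A → V} (X Y : QuivRep K V A t h) : Prop :=
  ∃ e : ∀ i, X.sp i ≃ₗ[K] Y.sp i,
    ∀ (a : A) (x : X.sp (t a)), e (h a) (X.map a x) = Y.map a (e (t a) x)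

/-- A quiver exceptional sequence of dimension vectors. -/
def IsQES (t h : A → V) {l : ℕ} (b : Fin l → V → ℕ) : Prop :=
  (∀ j, isRealSchurRoot K t h (b j)) ∧
  ∀ i j : Fin l, i < j →
    homMin K t h (b i) (b j) = 0 ∧ extMin K t h (b i) (b j) = 0 ∧
      eulerForm t h (natZ (b j)) (natZ (b i)) ≤ 0

/-- The cone of nonnegative rational linear combinations of a finite set of integral
vectors. -/
def coneOf (C : Finset (V → ℤ)) : Set (V → ℚ) :=
  {x | ∃ lam : (V → ℤ) → ℚ, (∀ c, 0 ≤ lam c) ∧ x = ∑ c ∈ C, lam c • intQ c}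

/-- A compatible subset of the set `Ψ(Q)_{≥ -1}` of almost positive real Schur roots. -/
def IsCompatible (t h : A → V) (C : Finset (V → ℤ)) : Prop :=
  (∀ x ∈ C, (∃ β : V → ℕ, isRealSchurRoot K t h β ∧ x = natZ β) ∨
      (∃ i : V, x = fun j => -(gammaRoot t h i j : ℤ))) ∧
  (∀ x ∈ C, ∀ y ∈ C, x ≠ y →
    (∀ β₁ β₂ : V → ℕ, isRealSchurRoot K t h β₁ → isRealSchurRoot K t h β₂ →
      x = natZ β₁ → y = natZ β₂ → extMin K t h β₁ β₂ = 0) ∧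
    (∀ (β : V → ℕ) (i : V), isRealSchurRoot K t h β →
      x = natZ β → y = (fun j => -(gammaRoot t h i j : ℤ)) → β i = 0))

/-- The domain of semi-invariants `D(β) ⊆ ℚ^{Q_0}`. -/
def Dom (t h : A → V) (β : V → ℕ) : Set (V → ℚ) :=
  {x | eulerForm t h x (natQ β) = 0 ∧
    ∀ β' : V → ℕ, Embeds K t h β' β → eulerForm t h x (natQ β') ≤ 0}

/-- A quiver exceptional set: a subset of `Ψ(Q)_{≥ -1}` of the form
`{β_1,…,β_l, −γ_{i_{l+1}},…,−γ_{i_m}}` with `β_j(i_k) = 0` and whose real-Schur-root part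
can be ordered into a quiver exceptional sequence. -/
def IsQExcSet (t h : A → V) (E : Finset (V → ℤ)) : Prop :=
  ∃ (l m : ℕ) (b : Fin l → V → ℕ) (g : Fin m → V),
    Function.Injective b ∧ Function.Injective g ∧ IsQES K t h b ∧
    (∀ j k, b j (g k) = 0) ∧
    (E : Set (V → ℤ)) =
      (Set.range fun j => natZ (b j)) ∪
      (Set.range fun k => (fun v => -(gammaRoot t h (g k) v : ℤ)))


/-- The underlying graph of the quiver is connected. -/
def IsConnectedQuiver (t h : A → V) : Prop :=
  ∀ i j : V,
    Relation.ReflTransGen (fun u v => ∃ a, (t a = u ∧ h a = v) ∨ (t a = v ∧ h a = u)) i j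

/-- Morphisms of representations. -/
structure RepHom {K : Type} [Field K] {V A : Type} {t h : A → V}
    (X Y : QuivRep K V A t h) : Type where
  app : ∀ i, X.sp i →ₗ[K] Y.sp i
  comm : ∀ a : A, (app (h a)).comp (X.map a) = (Y.map a).comp (app (t a))

namespace RepHom

variable {K₀ : Type} [Field K₀] {t h : A → V}

/-- The identity morphism. -/
def idHom (X : QuivRep K₀ V A t h) : RepHom X X :=
  ⟨fun _ => LinearMap.id, fun a => by ext x; simp⟩

/-- Composition of morphisms. -/
def comp {X Y Z : QuivRep K₀ V A t h} (f : RepHom X Y) (g : RepHom Y Z) : RepHom X Z :=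
  ⟨fun i => (g.app i).comp (f.app i), fun a => by
    ext x
    have hf := LinearMap.congr_fun (f.comm a) x
    have hg := LinearMap.congr_fun (g.comm a) (f.app (t a) x)
    simp only [LinearMap.comp_apply] at hf hg ⊢
    rw [hf, hg]⟩

/-- Sum of morphisms. -/
def add {X Y : QuivRep K₀ V A t h} (f g : RepHom X Y) : RepHom X Y :=
  ⟨fun i => f.app i + g.app i, fun a => by
    simp only [LinearMap.add_comp, LinearMap.comp_add, f.comm a, g.comm a]⟩

/-- Scalar multiple of a morphism. -/
def smul {X Y : QuivRep K₀ V A t h} (c : K₀) (f : RepHom X Y) : RepHom X Y :=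
  ⟨fun i => c • f.app i, fun a => by
    simp only [LinearMap.smul_comp, LinearMap.comp_smul, f.comm a]⟩

end RepHom

/-- The number of arrows `i → j` in the Ext-quiver `Q(𝓔)` of a sequence of dimension
vectors: `−⟨β_i, β_j⟩` for `i ≠ j`. -/
def extMult (t h : A → V) {l : ℕ} (b : Fin l → V → ℕ) (i j : Fin l) : ℕ :=
  if i = j then 0 else (-(eulerForm t h (natZ (b i)) (natZ (b j)))).toNat

/-- The arrow set of the Ext-quiver `Q(𝓔)`. -/
abbrev ExtArrow (t h : A → V) {l : ℕ} (b : Fin l → V → ℕ) : Type :=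
  (i : Fin l) × (j : Fin l) × Fin (extMult t h b i j)

/-- The representation space `rep(Q,β)` as a product of matrix spaces. -/
abbrev RepSpace (t h : A → V) (β : V → ℕ) : Type :=
  ∀ a : A, Matrix (Fin (β (h a))) (Fin (β (t a))) K

/-- The (base-change) action of `GL(β)` on `rep(Q,β)`. -/
def glAct (t h : A → V) {β : V → ℕ}
    (g : ∀ i, Matrix.GeneralLinearGroup (Fin (β i)) K) (W : RepSpace K t h β) :
    RepSpace K t h β :=
  fun a => (g (h a) : Matrix (Fin (β (h a))) (Fin (β (h a))) K) * W a *
    (((g (t a))⁻¹ : Matrix.GeneralLinearGroup (Fin (β (t a))) K) :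
      Matrix (Fin (β (t a))) (Fin (β (t a))) K)

/-- A polynomial function on `rep(Q,β)`. -/
def IsPolyFun (t h : A → V) {β : V → ℕ} (f : RepSpace K t h β → K) : Prop :=
  ∃ P : MvPolynomial ((a : A) × (Fin (β (h a)) × Fin (β (t a)))) K,
    ∀ W, f W = MvPolynomial.eval (fun x => W x.1 x.2.1 x.2.2) P

/-- The weight space `SI(Q,β)_σ` of semi-invariant polynomial functions of weight `σ`. -/
def SIweight (t h : A → V) (β : V → ℕ) (σ : V → ℤ) :
    Submodule K (RepSpace K t h β → K) where
  carrier := {f | IsPolyFun K t h f ∧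
    ∀ (g : ∀ i, Matrix.GeneralLinearGroup (Fin (β i)) K) (W : RepSpace K t h β),
      f (glAct K t h g W) =
        (((∏ i, (Matrix.GeneralLinearGroup.det (g i)) ^ σ i : Kˣ) : K)) * f W}
  zero_mem' := by
    refine ⟨⟨0, by simp⟩, by simp⟩
  add_mem' := by
    rintro f g ⟨⟨P, hP⟩, hf⟩ ⟨⟨Q, hQ⟩, hg⟩
    refine ⟨⟨P + Q, fun W => ?_⟩, fun gg W => ?_⟩
    · simp [hP W, hQ W]
    · simp only [Pi.add_apply, hf gg W, hg gg W]; ring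
  smul_mem' := by
    rintro c f ⟨⟨P, hP⟩, hf⟩
    refine ⟨⟨MvPolynomial.C c * P, fun W => ?_⟩, fun gg W => ?_⟩
    · simp [hP W]
    · simp only [Pi.smul_apply, hf gg W, smul_eq_mul]; ring

/-- Entry of a matrix accessed through natural-number indices. -/
def entryN {m n : ℕ} (M : Matrix (Fin m) (Fin n) K) (r c : ℕ) : K :=
  if hr : r < m then (if hc : c < n then M ⟨r, hr⟩ ⟨c, hc⟩ else 0) else 0

/-- The matrix of the map `d^V_W` (with `V` of dimension vector `α` varying and `W` of
dimension vector `w` fixed), in the standard bases. -/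
def schofieldMatrix (t h : A → V) {α w : V → ℕ}
    (Vm : RepSpace K t h α) (W : RepSpace K t h w) :
    Matrix ((a : A) × (Fin (w (h a)) × Fin (α (t a)))) ((i : V) × (Fin (w i) × Fin (α i))) K :=
  fun r c =>
    (if c.1 = h r.1 ∧ (c.2.1 : ℕ) = (r.2.1 : ℕ) then
      entryN K (Vm r.1) (c.2.2 : ℕ) (r.2.2 : ℕ) else 0)
    - (if c.1 = t r.1 ∧ (c.2.2 : ℕ) = (r.2.2 : ℕ) then
      entryN K (W r.1) (r.2.1 : ℕ) (c.2.1 : ℕ) else 0)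

/-- The Schofield semi-invariant `c_W : rep(Q,α) → K`, `V ↦ det d^V_W` (defined when
`⟨α, dim W⟩ = 0`, i.e. when `d^V_W` is a square matrix). -/
def schofieldSI (t h : A → V) {α w : V → ℕ} (W : RepSpace K t h w)
    (Vm : RepSpace K t h α) : K :=
  if hc : Fintype.card ((i : V) × (Fin (w i) × Fin (α i))) =
      Fintype.card ((a : A) × (Fin (w (h a)) × Fin (α (t a)))) then
    ((schofieldMatrix K t h Vm W).submatrix (Fintype.equivOfCardEq hc) id).det
  else 0

/-- The representation of `Q` attached to a point of `rep(Q,β)`. -/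
def toRep (t h : A → V) {β : V → ℕ} (W : RepSpace K t h β) : QuivRep K V A t h where
  sp i := Fin (β i) → K
  map a := Matrix.mulVecLin (W a)

/-!
Linear independence is proved by triangularity: every nonempty compatible set `C` has an element
`c` together with a linear functional that is nonzero at `c` and zero on the rest of `C`.

If `C` contains some `−γ_i`, choose such an `i` which no path reaches from another vertex `j` with
`−γ_j ∈ C`; the functional is the `i`-th coordinate.

If `C` consists of real Schur roots, realise them by exceptional representations. Such a
representation is isomorphic to a generic point of its representation space, so these
representations have no extensions among each other. By the Happel–Ringel lemma every nonzero
morphism between them is injective or surjective, which rules out cycles of nonzero morphisms.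
So one of them, `X`, receives no nonzero morphism from the others, and the functional is
`⟨·, dim X⟩`.
-/

section LinearAlgebra

open AffineMap (lineMap)

theorem linearIndepOn_finset_of_forall_exists_dual {R M ι : Type*} [CommRing R] [IsDomain R]
    [AddCommGroup M] [Module R M] {v : ι → M} {s : Finset ι}
    (hs : ∀ s' ⊆ s, s'.Nonempty →
      ∃ i ∈ s', ∃ f : Module.Dual R M, f (v i) ≠ 0 ∧ ∀ j ∈ s', j ≠ i → f (v j) = 0) :
    LinearIndepOn R v s := by
  classical
  rw [linearIndepOn_finset_iff]
  intro g hg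
  by_contra! ⟨i₀, hi₀, hgi₀⟩
  obtain ⟨i, hi, f, hfi, hf⟩ := hs {i ∈ s | g i ≠ 0} (Finset.filter_subset _ _)
    ⟨i₀, Finset.mem_filter.2 ⟨hi₀, hgi₀⟩⟩
  obtain ⟨his, hgi⟩ := Finset.mem_filter.1 hi
  have hsum : ∑ j ∈ s, g j * f (v j) = 0 := by
    simpa only [map_sum, map_smul, smul_eq_mul, map_zero] using congrArg f hg
  rw [Finset.sum_eq_single_of_mem i his] at hsum
  · exact mul_ne_zero hgi hfi hsum
  · intro j hj hji
    by_cases hgj : g j = 0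
    · rw [hgj, zero_mul]
    · rw [hf j (Finset.mem_filter.2 ⟨hj, hgj⟩) hji, mul_zero]

variable {K E F : Type*} [Field K] [AddCommGroup E] [Module K E] [AddCommGroup F] [Module K F]

theorem exists_comp_comp_eq_self (f : E →ₗ[K] F) : ∃ s : F →ₗ[K] E, ∀ x, f (s (f x)) = f x := by
  obtain ⟨r, hr⟩ := f.rangeRestrict.exists_rightInverse_of_surjective f.range_rangeRestrict
  obtain ⟨s, hs⟩ := r.exists_extend
  refine ⟨s, fun x => ?_⟩
  have hsx : s (f x) = r (f.rangeRestrict x) := LinearMap.congr_fun hs (f.rangeRestrict x)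
  rw [hsx]
  exact congrArg Subtype.val (LinearMap.congr_fun hr (f.rangeRestrict x))

theorem finite_setOf_not_isUnit_smul_add_one [FiniteDimensional K F] (T : Module.End K F) :
    {s : K | ¬ IsUnit (s • T + 1)}.Finite := by
  refine ((Module.End.finite_spectrum T).image fun μ => -μ⁻¹).subset fun s hs => ?_
  have hs0 : s ≠ 0 := by
    rintro rfl
    simp at hs
  refine ⟨-s⁻¹, fun hu => hs ?_, by simp⟩
  have hfactor : s • T + 1 = Units.mk0 (-s) (neg_ne_zero.2 hs0) •
      (algebraMap K (Module.End K F) (-s⁻¹) - T) := by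
    rw [Units.smul_mk0, smul_sub, Algebra.algebraMap_eq_smul_one, smul_smul, neg_mul_neg,
      mul_inv_cancel₀ hs0, one_smul, neg_smul, sub_neg_eq_add, add_comm]
  rw [hfactor]
  exact hu.smul _

theorem finite_setOf_not_surjective_lineMap [FiniteDimensional K F] {D : E →ₗ[K] F}
    (hD : Function.Surjective D) (D' : E →ₗ[K] F) :
    {s : K | ¬ Function.Surjective (lineMap D D' s)}.Finite := by
  obtain ⟨r, hr⟩ := D.exists_rightInverse_of_surjective (LinearMap.range_eq_top.2 hD)
  refine (finite_setOf_not_isUnit_smul_add_one ((D' - D) ∘ₗ r)).subset fun s hs hu => hs ?_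
  have hcomp : lineMap D D' s ∘ₗ r = s • ((D' - D) ∘ₗ r) + 1 := by
    rw [AffineMap.lineMap_apply_module', LinearMap.add_comp, LinearMap.smul_comp, hr]
    rfl
  rw [← hcomp] at hu
  exact Function.Surjective.of_comp (g := r) ((Module.End.isUnit_iff _).1 hu).surjective

end LinearAlgebra

theorem exists_forall_not_of_not_comp {ι : Type*} [Finite ι] [Nonempty ι] (d : ι → ℕ)
    {mono epi : ι → ι → Prop} (hmono : ∀ i j, mono i j → d i < d j)
    (hepi : ∀ i j, epi i j → d j < d i) (hcomp : ∀ i j k, epi i j → ¬ mono j k) :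
    ∃ i, ∀ j, ¬ mono j i ∧ ¬ epi j i := by
  by_cases hM : {i | ∃ k, mono i k}.Nonempty
  · obtain ⟨i, ⟨k, hik⟩, hmin⟩ := (measure d).wf.has_min _ hM
    exact ⟨i, fun j => ⟨fun hji => hmin j ⟨i, hji⟩ (hmono j i hji),
      fun hji => hcomp j i k hji hik⟩⟩
  · obtain ⟨i, hmax⟩ := Finite.exists_max d
    exact ⟨i, fun j => ⟨fun hji => hM ⟨j, i, hji⟩,
      fun hji => (hepi j i hji).not_ge (hmax j)⟩⟩

section Paths

variable {V A : Type} {t h : A → V}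

theorem IsPathFrom.append {i j k : V} {p q : List A} (hp : IsPathFrom t h i p j)
    (hq : IsPathFrom t h j q k) : IsPathFrom t h i (p ++ q) k := by
  induction p generalizing i with
  | nil => cases hp; exact hq
  | cons a p ih => exact ⟨hp.1, ih hp.2⟩

theorem exists_isPathFrom_of_gammaRoot_ne_zero {i j : V} (hij : gammaRoot t h i j ≠ 0) :
    ∃ p, IsPathFrom t h i p j :=
  Set.nonempty_of_ncard_ne_zero hij

theorem Acyclic.gammaRoot_self (hQ : Acyclic t h) (i : V) : gammaRoot t h i i = 1 :=
  Set.ncard_eq_one.2 ⟨[], Set.eq_singleton_iff_unique_mem.2 ⟨rfl, hQ i⟩⟩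

theorem Acyclic.exists_forall_gammaRoot_eq_zero [Finite V] (hQ : Acyclic t h) {S : Set V}
    (hS : S.Nonempty) : ∃ i ∈ S, ∀ j ∈ S, j ≠ i → gammaRoot t h j i = 0 := by
  let reaches (j i : V) : Prop := ∃ p, p ≠ [] ∧ IsPathFrom t h j p i
  have : IsTrans V reaches :=
    ⟨fun _ _ _ ⟨p, hp, hij⟩ ⟨q, _, hjk⟩ => ⟨p ++ q, by simp [hp], hij.append hjk⟩⟩
  have : Std.Irrefl reaches := ⟨fun i ⟨p, hp, hii⟩ => hp (hQ i p hii)⟩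
  obtain ⟨i, hi, hmin⟩ := (Finite.wellFounded_of_trans_of_irrefl reaches).has_min S hS
  refine ⟨i, hi, fun j hj hji => ?_⟩
  by_contra hγ
  obtain ⟨p, hp⟩ := exists_isPathFrom_of_gammaRoot_ne_zero hγ
  refine hmin j hj ⟨p, ?_, hp⟩
  rintro rfl
  exact hji hp

end Paths

section EulerForm

variable {V A : Type} [Fintype V] [Fintype A]

/-- The linear functional `⟨·, y⟩` given by the Euler form. -/
def eulerFormLeft {R : Type} [CommRing R] (t h : A → V) (y : V → R) : Module.Dual R (V → R) where
  toFun x := eulerForm t h x y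
  map_add' x x' := by
    simp only [eulerForm, Pi.add_apply, add_mul, Finset.sum_add_distrib]
    ring
  map_smul' c x := by
    simp only [eulerForm, Pi.smul_apply, smul_eq_mul, RingHom.id_apply, mul_sub, Finset.mul_sum,
      mul_assoc]

theorem eulerFormLeft_intQ (t h : A → V) (x y : V → ℤ) :
    eulerFormLeft t h (intQ y) (intQ x) = ((eulerForm t h x y : ℤ) : ℚ) := by
  simp [eulerFormLeft, eulerForm, intQ]

end EulerForm

namespace QuivRep

variable {K : Type} [Field K] {V A : Type} {t h : A → V} {X X' Y Y' Z : QuivRep K V A t h}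

section HomExt

theorem mem_homS_iff {f : ∀ i, X.sp i →ₗ[K] Y.sp i} :
    f ∈ homS X Y ↔ ∀ (a : A) (x : X.sp (t a)), f (h a) (X.map a x) = Y.map a (f (t a) x) :=
  forall_congr' fun _ => LinearMap.ext_iff

theorem dmap_apply (φ : ∀ i, X.sp i →ₗ[K] Y.sp i) (a : A) (x : X.sp (t a)) :
    dmap X Y φ a x = φ (h a) (X.map a x) - Y.map a (φ (t a) x) :=
  rfl

theorem ker_dmap (X Y : QuivRep K V A t h) : LinearMap.ker (dmap X Y) = homS X Y := by
  ext f
  simp only [LinearMap.mem_ker, mem_homS_iff, funext_iff, LinearMap.ext_iff, dmap_apply,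
    Pi.zero_apply, LinearMap.zero_apply, sub_eq_zero]

theorem extDim_eq_zero_iff [Finite A] : extDim X Y = 0 ↔ Function.Surjective (dmap X Y) := by
  rw [extDim, Module.finrank_eq_zero_iff_of_free, Submodule.Quotient.subsingleton_iff,
    LinearMap.range_eq_top]

theorem homDim_sub_extDim [Fintype V] [Fintype A] (X Y : QuivRep K V A t h) :
    (homDim X Y : ℤ) - extDim X Y = eulerForm t h (natZ X.dimVec) (natZ Y.dimVec) := by
  have hker := LinearMap.finrank_range_add_finrank_ker (dmap X Y)
  have hcoker := Submodule.finrank_quotient_add_finrank (LinearMap.range (dmap X Y))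
  rw [ker_dmap, Module.finrank_pi_fintype] at hker
  rw [Module.finrank_pi_fintype] at hcoker
  simp only [Module.finrank_linearMap] at hker hcoker
  zify at hker hcoker
  simp only [homDim, extDim, eulerForm, natZ, dimVec]
  linarith

theorem exists_mem_homS_ne_zero (hXY : homDim X Y ≠ 0) : ∃ f ∈ homS X Y, f ≠ 0 :=
  (homS X Y).ne_bot_iff.1 fun hbot => hXY (by rw [homDim, hbot, finrank_bot])

theorem comp_mem_homS {f : ∀ i, X.sp i →ₗ[K] Y.sp i} {g : ∀ i, Y.sp i →ₗ[K] Z.sp i}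
    (hf : f ∈ homS X Y) (hg : g ∈ homS Y Z) :
    (fun i => g i ∘ₗ f i : ∀ i, X.sp i →ₗ[K] Z.sp i) ∈ homS X Z := by
  rw [mem_homS_iff] at hf hg ⊢
  intro a x
  simp only [LinearMap.comp_apply, hf, hg]

end HomExt

section Iso

theorem extDim_congr (hX : RepIso K X X') (hY : RepIso K Y Y') : extDim X Y = extDim X' Y' := by
  obtain ⟨e, he⟩ := hX
  obtain ⟨g, hg⟩ := hY
  let vertexEquiv : (∀ i, X.sp i →ₗ[K] Y.sp i) ≃ₗ[K] ∀ i, X'.sp i →ₗ[K] Y'.sp i :=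
    LinearEquiv.piCongrRight fun i => (e i).arrowCongr (g i)
  let arrowEquiv : (∀ a, X.sp (t a) →ₗ[K] Y.sp (h a)) ≃ₗ[K] ∀ a, X'.sp (t a) →ₗ[K] Y'.sp (h a) :=
    LinearEquiv.piCongrRight fun a => (e (t a)).arrowCongr (g (h a))
  have hcomm : arrowEquiv.toLinearMap ∘ₗ dmap X Y = dmap X' Y' ∘ₗ vertexEquiv.toLinearMap := by
    refine LinearMap.ext fun φ => funext fun a => LinearMap.ext fun x => ?_
    obtain ⟨x, rfl⟩ := (e (t a)).surjective x
    simp [arrowEquiv, vertexEquiv, dmap_apply, LinearEquiv.arrowCongr_apply, hg, ← he]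
  refine LinearEquiv.finrank_eq (Submodule.Quotient.equiv _ _ arrowEquiv ?_)
  rw [← LinearMap.range_comp, hcomm, LinearEquiv.range_comp]

theorem dimVec_congr (hX : RepIso K X X') : X.dimVec = X'.dimVec :=
  let ⟨e, _⟩ := hX
  funext fun i => (e i).finrank_eq

theorem homDim_congr [Finite V] [Finite A] (hX : RepIso K X X') (hY : RepIso K Y Y') :
    homDim X Y = homDim X' Y' := by
  cases nonempty_fintype V
  cases nonempty_fintype A
  have hXY := homDim_sub_extDim X Y
  rw [extDim_congr hX hY, dimVec_congr hX, dimVec_congr hY, ← homDim_sub_extDim] at hXY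
  omega

theorem IsExceptional.of_repIso [Finite V] [Finite A] (hX : X.IsExceptional)
    (hXX' : RepIso K X X') : X'.IsExceptional :=
  ⟨(extDim_congr hXX' hXX').symm.trans hX.1, (homDim_congr hXX' hXX').symm.trans hX.2⟩

end Iso

section Schur

theorem IsSchur.exists_ne_zero (hX : X.IsSchur) : ∃ i, ∃ x : X.sp i, x ≠ 0 := by
  have hend : Module.finrank K (homS X X) = 1 := hX
  have : Nontrivial (homS X X) := Module.nontrivial_of_finrank_pos (R := K) (by omega)
  obtain ⟨f, hf⟩ := exists_ne (0 : homS X X)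
  by_contra! hzero
  exact hf (Subtype.ext (funext fun i => LinearMap.ext fun x => hzero i _))

theorem IsSchur.exists_eq_smul (hX : X.IsSchur) {f : ∀ i, X.sp i →ₗ[K] X.sp i}
    (hf : f ∈ homS X X) : ∃ c : K, ∀ i x, f i x = c • x := by
  have hid : (fun _ => LinearMap.id) ∈ homS X X := fun _ => rfl
  have hid_ne : (⟨_, hid⟩ : homS X X) ≠ 0 := fun hid_zero => by
    obtain ⟨i, x, hx⟩ := hX.exists_ne_zero
    exact hx (LinearMap.congr_fun (congrFun (congrArg Subtype.val hid_zero) i) x)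
  obtain ⟨c, hc⟩ := (finrank_eq_one_iff_of_nonzero' _ hid_ne).1 hX ⟨f, hf⟩
  exact ⟨c, fun i x => (LinearMap.congr_fun (congrFun (congrArg Subtype.val hc) i) x).symm⟩

/- The failure of `f ∘ s` to be an endomorphism of `Y` lies in the range of `f`; its image under `s`
is the class that `Ext¹(Y, X) = 0` allows one to write as `d φ`. -/
theorem exists_quasiInverse_and_correction [Finite A] (hE : extDim Y X = 0)
    {f : ∀ i, X.sp i →ₗ[K] Y.sp i} (hf : f ∈ homS X Y) :
    ∃ s φ : ∀ i, Y.sp i →ₗ[K] X.sp i, (∀ i x, f i (s i (f i x)) = f i x) ∧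
      (fun i => f i ∘ₗ (φ i - s i)) ∈ homS Y Y ∧ (fun i => φ i ∘ₗ f i) ∈ homS X X := by
  rw [mem_homS_iff] at hf
  choose s hs using fun i => exists_comp_comp_eq_self (f i)
  obtain ⟨φ, hφ⟩ := extDim_eq_zero_iff.1 hE
    fun a => s (h a) ∘ₗ dmap Y Y (fun i => f i ∘ₗ s i) a
  replace hφ : ∀ a y, φ (h a) (Y.map a y) - X.map a (φ (t a) y) =
      s (h a) (f (h a) (s (h a) (Y.map a y)) - Y.map a (f (t a) (s (t a) y))) :=
    fun a y => LinearMap.congr_fun (congrFun hφ a) y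
  refine ⟨s, φ, hs, mem_homS_iff.2 fun a y => ?_, mem_homS_iff.2 fun a x => ?_⟩
  · have hfφ := congrArg (f (h a)) (hφ a y)
    simp only [map_sub, hs, ← hf] at hfφ
    simp only [LinearMap.sub_apply, LinearMap.comp_apply, map_sub, ← hf]
    rwa [sub_eq_sub_iff_sub_eq_sub]
  · have hφf := hφ a (f (t a) x)
    simp only [hs, ← hf, sub_self, map_zero] at hφf
    exact sub_eq_zero.1 hφf

theorem IsSchur.injective_or_surjective [Finite A] (hX : X.IsSchur) (hY : Y.IsSchur)
    (hE : extDim Y X = 0) {f : ∀ i, X.sp i →ₗ[K] Y.sp i} (hf : f ∈ homS X Y)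
    (hf0 : f ≠ 0) : (∀ i, Function.Injective (f i)) ∨ ∀ i, Function.Surjective (f i) := by
  obtain ⟨s, φ, hs, hend_Y, hend_X⟩ := exists_quasiInverse_and_correction hE hf
  obtain ⟨l, hl⟩ := hY.exists_eq_smul hend_Y
  obtain ⟨m, hm⟩ := hX.exists_eq_smul hend_X
  simp only [LinearMap.comp_apply, LinearMap.sub_apply] at hl hm
  rcases eq_or_ne l 0 with rfl | hl0
  · left
    have hm0 : m ≠ 0 := by
      rintro rfl
      refine hf0 (funext fun i => LinearMap.ext fun x => ?_)
      simpa [hm, hs] using hl i (f i x)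
    intro i x y hxy
    refine smul_right_injective _ hm0 ?_
    simp only [← hm, hxy]
  · right
    intro i y
    refine ⟨l⁻¹ • (φ i y - s i y), ?_⟩
    rw [map_smul, hl, inv_smul_smul₀ hl0]

end Schur

section MonoEpi

/-- There is a monomorphism of representations `X → Y`. -/
def HasMono (X Y : QuivRep K V A t h) : Prop :=
  ∃ f ∈ homS X Y, ∀ i, Function.Injective (f i)

/-- There is an epimorphism of representations `X → Y`. -/
def HasEpi (X Y : QuivRep K V A t h) : Prop :=
  ∃ f ∈ homS X Y, ∀ i, Function.Surjective (f i)

theorem hasMono_or_hasEpi [Finite A] (hX : X.IsSchur) (hY : Y.IsSchur) (hE : extDim Y X = 0)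
    (hXY : homDim X Y ≠ 0) : HasMono X Y ∨ HasEpi X Y :=
  let ⟨f, hf, hf0⟩ := exists_mem_homS_ne_zero hXY
  (hX.injective_or_surjective hY hE hf hf0).imp
    (fun hinj => ⟨f, hf, hinj⟩) fun hsurj => ⟨f, hf, hsurj⟩

theorem HasMono.dimVec_le (hXY : HasMono X Y) : X.dimVec ≤ Y.dimVec :=
  let ⟨_, _, hinj⟩ := hXY
  fun i => LinearMap.finrank_le_finrank_of_injective (hinj i)

theorem HasEpi.dimVec_le (hXY : HasEpi X Y) : Y.dimVec ≤ X.dimVec :=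
  let ⟨_, _, hsurj⟩ := hXY
  fun i => LinearMap.finrank_le_finrank_of_surjective (hsurj i)

theorem HasMono.repIso (hXY : HasMono X Y) (hd : X.dimVec = Y.dimVec) : RepIso K X Y :=
  let ⟨f, hf, hinj⟩ := hXY
  ⟨fun i => (f i).linearEquivOfInjective (hinj i) (congrFun hd i), mem_homS_iff.1 hf⟩

theorem HasEpi.repIso (hXY : HasEpi X Y) (hd : X.dimVec = Y.dimVec) : RepIso K X Y :=
  let ⟨f, hf, hsurj⟩ := hXY
  ⟨fun i => LinearEquiv.ofBijective (f i)
    ⟨(LinearMap.injective_iff_surjective_of_finrank_eq_finrank (congrFun hd i)).2 (hsurj i),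
      hsurj i⟩, mem_homS_iff.1 hf⟩

/- The composite `X ↠ Y ↪ Z` is nonzero, so the Happel–Ringel lemma applies to it. -/
theorem HasEpi.dimVec_eq_or_eq_of_hasMono [Finite A] (hX : X.IsSchur) (hY : Y.IsSchur)
    (hZ : Z.IsSchur) (hE : extDim Z X = 0) (hXY : HasEpi X Y) (hYZ : HasMono Y Z) :
    X.dimVec = Y.dimVec ∨ Y.dimVec = Z.dimVec := by
  have hYX := hXY.dimVec_le
  have hYZ' := hYZ.dimVec_le
  obtain ⟨f, hf, hsurj⟩ := hXY
  obtain ⟨g, hg, hinj⟩ := hYZ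
  have hgf : (fun i => g i ∘ₗ f i : ∀ i, X.sp i →ₗ[K] Z.sp i) ≠ 0 := by
    intro hgf
    obtain ⟨i, y, hy⟩ := hY.exists_ne_zero
    obtain ⟨x, rfl⟩ := hsurj i y
    exact hy ((map_eq_zero_iff (g i) (hinj i)).1 (LinearMap.congr_fun (congrFun hgf i) x))
  rcases hX.injective_or_surjective hZ hE (comp_mem_homS hf hg) hgf with hgf_inj | hgf_surj
  · have hXY : HasMono X Y := ⟨f, hf, fun i => Function.Injective.of_comp (hgf_inj i)⟩
    exact .inl (hXY.dimVec_le.antisymm hYX)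
  · have hYZ : HasEpi Y Z := ⟨g, hg, fun i => Function.Surjective.of_comp (hgf_surj i)⟩
    exact .inr (hYZ'.antisymm hYZ.dimVec_le)

theorem exists_forall_homDim_eq_zero [Finite V] [Finite A] {ι : Type*} [Finite ι] [Nonempty ι]
    {X : ι → QuivRep K V A t h} (hX : ∀ i, (X i).IsSchur) (hE : ∀ i j, extDim (X i) (X j) = 0)
    (hd : Function.Injective fun i => (X i).dimVec) :
    ∃ i, ∀ j, j ≠ i → homDim (X j) (X i) = 0 := by
  cases nonempty_fintype V
  have hsum : StrictMono fun x : V → ℕ => ∑ v, x v := Fintype.sum_strictMono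
  obtain ⟨i, hi⟩ := exists_forall_not_of_not_comp (fun i => ∑ v, (X i).dimVec v)
    (mono := fun i j => i ≠ j ∧ HasMono (X i) (X j))
    (epi := fun i j => i ≠ j ∧ HasEpi (X i) (X j))
    (fun i j ⟨hij, hmono⟩ => hsum (hmono.dimVec_le.lt_of_ne (hd.ne hij)))
    (fun i j ⟨hij, hepi⟩ => hsum (hepi.dimVec_le.lt_of_ne (hd.ne hij.symm)))
    (fun i j k ⟨hij, hepi⟩ ⟨hjk, hmono⟩ =>
      (hepi.dimVec_eq_or_eq_of_hasMono (hX i) (hX j) (hX k) (hE k i) hmono).elim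
        (hd.ne hij) (hd.ne hjk))
  refine ⟨i, fun j hji => by_contra fun hhom => ?_⟩
  exact (hasMono_or_hasEpi (hX j) (hX i) (hE i j) hhom).elim
    (fun hmono => (hi j).1 ⟨hji, hmono⟩) fun hepi => (hi j).2 ⟨hji, hepi⟩

end MonoEpi

section GenericExt

open AffineMap (lineMap)

variable {α β : V → ℕ}

theorem exists_repIso_toRep (hX : X.dimVec = β) :
    ∃ W : RepSpace K t h β, RepIso K X (toRep K t h W) := by
  let e i : X.sp i ≃ₗ[K] (Fin (β i) → K) :=
    LinearEquiv.ofFinrankEq _ _ (by rw [Module.finrank_fin_fun, ← hX]; rfl)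
  refine ⟨fun a => LinearMap.toMatrix' (e (h a) ∘ₗ X.map a ∘ₗ (e (t a)).symm), e, fun a x => ?_⟩
  simp only [toRep, ← Matrix.toLin'_apply', Matrix.toLin'_toMatrix']
  exact congrArg (fun y => e (h a) (X.map a y)) ((e (t a)).symm_apply_apply x).symm

theorem dimVec_toRep (W : RepSpace K t h β) : (toRep K t h W).dimVec = β :=
  funext fun _ => Module.finrank_fin_fun K

theorem dmap_toRep_lineMap (W W' : RepSpace K t h α) (U U' : RepSpace K t h β) (s : K) :
    dmap (toRep K t h (lineMap W W' s)) (toRep K t h (lineMap U U' s)) =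
      lineMap (dmap (toRep K t h W) (toRep K t h U))
        (dmap (toRep K t h W') (toRep K t h U')) s := by
  rw [AffineMap.lineMap_apply_module']
  refine LinearMap.ext fun (φ : ∀ i, (Fin (α i) → K) →ₗ[K] (Fin (β i) → K)) => funext fun a =>
    LinearMap.ext fun (x : Fin (α (t a)) → K) => ?_
  change φ (h a) ((lineMap W W' s a).mulVec x) - (lineMap U U' s a).mulVec (φ (t a) x) =
    s • ((φ (h a) ((W' a).mulVec x) - (U' a).mulVec (φ (t a) x)) -
      (φ (h a) ((W a).mulVec x) - (U a).mulVec (φ (t a) x))) +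
        (φ (h a) ((W a).mulVec x) - (U a).mulVec (φ (t a) x))
  simp only [AffineMap.lineMap_apply_module', Pi.add_apply, Pi.smul_apply, Pi.sub_apply,
    Matrix.add_mulVec, Matrix.smul_mulVec, Matrix.sub_mulVec, map_add, map_smul, map_sub]
  module

theorem finite_setOf_extDim_lineMap_ne_zero [Finite A] {W : RepSpace K t h α}
    {U : RepSpace K t h β} (hE : extDim (toRep K t h W) (toRep K t h U) = 0)
    (W' : RepSpace K t h α) (U' : RepSpace K t h β) :
    {s : K | extDim (toRep K t h (lineMap W W' s)) (toRep K t h (lineMap U U' s)) ≠ 0}.Finite := by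
  refine (finite_setOf_not_surjective_lineMap (extDim_eq_zero_iff.1 hE)
    (dmap (toRep K t h W') (toRep K t h U'))).subset fun s hs hsurj => hs ?_
  rw [extDim_eq_zero_iff, dmap_toRep_lineMap]
  exact hsurj

theorem IsExceptional.repIso_of_extDim_eq_zero [Finite V] [Finite A] (hX : X.IsExceptional)
    (hd : Z.dimVec = X.dimVec) (hZX : extDim Z X = 0) (hXZ : extDim X Z = 0)
    (hZZ : extDim Z Z = 0) : RepIso K Z X := by
  cases nonempty_fintype V
  cases nonempty_fintype A
  have hXX : extDim X X = 0 := hX.1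
  have hend : homDim X X = 1 := hX.2
  have eulerXX := homDim_sub_extDim X X
  have eulerZX := homDim_sub_extDim Z X
  have eulerZZ := homDim_sub_extDim Z Z
  rw [hd] at eulerZX eulerZZ
  have hZ : Z.IsSchur := by
    rw [IsSchur]
    omega
  exact (hasMono_or_hasEpi hZ hX.2 hXZ (by omega)).elim (·.repIso hd) (·.repIso hd)

theorem IsExceptional.finite_setOf_not_repIso_lineMap [Finite V] [Finite A]
    {W : RepSpace K t h β} (hW : (toRep K t h W).IsExceptional) (W' : RepSpace K t h β) :
    {s : K | ¬ RepIso K (toRep K t h (lineMap W W' s)) (toRep K t h W)}.Finite := by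
  have hself := finite_setOf_extDim_lineMap_ne_zero hW.1 W' W'
  have hleft := finite_setOf_extDim_lineMap_ne_zero hW.1 W' W
  have hright := finite_setOf_extDim_lineMap_ne_zero hW.1 W W'
  refine ((hself.union hleft).union hright).subset fun s hs => ?_
  by_contra! hgood
  simp only [AffineMap.lineMap_same_apply, Set.mem_union, Set.mem_ofPred_eq, not_or,
    not_not] at hgood
  obtain ⟨⟨hss, hsW⟩, hWs⟩ := hgood
  exact hs (hW.repIso_of_extDim_eq_zero (by rw [dimVec_toRep, dimVec_toRep]) hsW hWs hss)

/- On the lines in the two representation spaces from `X` and `Y` to a pair of representations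
without extensions, a general point has no extensions either, and is isomorphic to `(X, Y)`. -/
theorem IsExceptional.extDim_eq_zero_of_extMin_eq_zero [Infinite K] [Finite V] [Finite A]
    (hX : X.IsExceptional) (hY : Y.IsExceptional) (hmin : extMin K t h X.dimVec Y.dimVec = 0) :
    extDim X Y = 0 := by
  obtain ⟨X', Y', hX', hY', hE⟩ := Nat.sInf_mem
    (s := {n | ∃ X' Y' : QuivRep K V A t h,
      X'.dimVec = X.dimVec ∧ Y'.dimVec = Y.dimVec ∧ extDim X' Y' = n}) ⟨_, X, Y, rfl, rfl, rfl⟩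
  obtain ⟨W, hW⟩ := exists_repIso_toRep (X := X) rfl
  obtain ⟨U, hU⟩ := exists_repIso_toRep (X := Y) rfl
  obtain ⟨W', hW'⟩ := exists_repIso_toRep hX'
  obtain ⟨U', hU'⟩ := exists_repIso_toRep hY'
  have hE' : extDim (toRep K t h W') (toRep K t h U') = 0 :=
    (extDim_congr hW' hU').symm.trans (hE.trans hmin)
  have hfinW := (hX.of_repIso hW).finite_setOf_not_repIso_lineMap W'
  have hfinU := (hY.of_repIso hU).finite_setOf_not_repIso_lineMap U'
  have hfinE := (finite_setOf_extDim_lineMap_ne_zero hE' W U).preimage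
    (sub_right_injective (b := (1 : K))).injOn
  obtain ⟨s, hs⟩ := ((hfinW.union hfinU).union hfinE).exists_notMem
  simp only [Set.mem_union, Set.mem_preimage, Set.mem_ofPred_eq, AffineMap.lineMap_apply_one_sub,
    not_or, not_not] at hs
  obtain ⟨⟨hsW, hsU⟩, hsE⟩ := hs
  rw [extDim_congr hW hU, ← extDim_congr hsW hsU, hsE]

end GenericExt

end QuivRep

namespace IsCompatible

open QuivRep

variable {K : Type} [Field K] {V A : Type} {t h : A → V} {C D : Finset (V → ℤ)}

theorem subset (hC : IsCompatible K t h C) (hDC : D ⊆ C) : IsCompatible K t h D :=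
  ⟨fun x hx => hC.1 x (hDC hx), fun x hx y hy => hC.2 x (hDC hx) y (hDC hy)⟩

theorem exists_dual_of_neg_gammaRoot_mem [Finite V] (hC : IsCompatible K t h C)
    (hQ : Acyclic t h) {k : V} (hk : (fun j => -(gammaRoot t h k j : ℤ)) ∈ C) :
    ∃ c ∈ C, ∃ f : Module.Dual ℚ (V → ℚ),
      f (intQ c) ≠ 0 ∧ ∀ d ∈ C, d ≠ c → f (intQ d) = 0 := by
  obtain ⟨i, hi, hsource⟩ := hQ.exists_forall_gammaRoot_eq_zero
    (S := {i | (fun j => -(gammaRoot t h i j : ℤ)) ∈ C}) ⟨k, hk⟩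
  refine ⟨_, hi, LinearMap.proj i, by simp [intQ, hQ.gammaRoot_self], fun d hd hdi => ?_⟩
  suffices d i = 0 by simp [intQ, this]
  rcases hC.1 d hd with ⟨β, hβ, rfl⟩ | ⟨j, rfl⟩
  · simp [natZ, (hC.2 _ hd _ hi hdi).2 β i hβ rfl rfl]
  · have hji : j ≠ i := by
      rintro rfl
      exact hdi rfl
    simp [hsource j hd hji]

theorem exists_dual_of_forall_isRealSchurRoot [Infinite K] [Finite V] [Finite A]
    (hC : IsCompatible K t h C) (hne : C.Nonempty)
    (hreal : ∀ c ∈ C, ∃ β, isRealSchurRoot K t h β ∧ c = natZ β) :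
    ∃ c ∈ C, ∃ f : Module.Dual ℚ (V → ℚ),
      f (intQ c) ≠ 0 ∧ ∀ d ∈ C, d ≠ c → f (intQ d) = 0 := by
  cases nonempty_fintype V
  cases nonempty_fintype A
  have hrep : ∀ c : C, ∃ X : QuivRep K V A t h, X.IsExceptional ∧ c.1 = natZ X.dimVec := by
    rintro ⟨c, hc⟩
    obtain ⟨_, ⟨X, rfl, hX⟩, hcX⟩ := hreal c hc
    exact ⟨X, hX, hcX⟩
  choose X hX hcX using hrep
  have hE : ∀ c d, extDim (X c) (X d) = 0 := by
    intro c d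
    rcases eq_or_ne c d with rfl | hcd
    · exact (hX c).1
    · exact (hX c).extDim_eq_zero_of_extMin_eq_zero (hX d) <|
        (hC.2 c c.2 d d.2 (Subtype.coe_ne_coe.2 hcd)).1 _ _ ⟨_, rfl, hX c⟩ ⟨_, rfl, hX d⟩
          (hcX c) (hcX d)
  have hdim : Function.Injective fun c => (X c).dimVec := fun c d hcd =>
    Subtype.ext ((hcX c).trans ((congrArg natZ hcd).trans (hcX d).symm))
  have heuler : ∀ c d, eulerFormLeft t h (intQ d.1) (intQ c.1) = homDim (X c) (X d) := by
    intro c d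
    rw [eulerFormLeft_intQ, hcX c, hcX d, ← homDim_sub_extDim, hE]
    simp
  have : Nonempty C := hne.to_subtype
  obtain ⟨c, hc⟩ := exists_forall_homDim_eq_zero (fun c => (hX c).2) hE hdim
  refine ⟨c, c.2, eulerFormLeft t h (intQ c.1), ?_, fun d hd hdc => ?_⟩
  · rw [heuler, (hX c).2]
    simp
  · rw [heuler ⟨d, hd⟩ c, hc _ (Subtype.coe_ne_coe.1 hdc), Nat.cast_zero]

theorem exists_dual [Infinite K] [Finite V] [Finite A] (hC : IsCompatible K t h C)
    (hQ : Acyclic t h) (hne : C.Nonempty) :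
    ∃ c ∈ C, ∃ f : Module.Dual ℚ (V → ℚ),
      f (intQ c) ≠ 0 ∧ ∀ d ∈ C, d ≠ c → f (intQ d) = 0 := by
  by_cases hneg : ∃ k, (fun j => -(gammaRoot t h k j : ℤ)) ∈ C
  · obtain ⟨k, hk⟩ := hneg
    exact hC.exists_dual_of_neg_gammaRoot_mem hQ hk
  · refine hC.exists_dual_of_forall_isRealSchurRoot hne fun c hc => (hC.1 c hc).resolve_right ?_
    rintro ⟨k, rfl⟩
    exact hneg ⟨k, hc⟩

end IsCompatible

section General

variable {K : Type} [Field K] {V A : Type}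

theorem stmt9_general [Infinite K] [Fintype V] [Finite A] (t h : A → V) (hQ : Acyclic t h)
    (C : Finset (V → ℤ)) (hC : IsCompatible K t h C) :
    LinearIndependent ℚ (fun c : {x // x ∈ C} => intQ c.val) ∧
    C.card ≤ Fintype.card V := by
  have hli : LinearIndependent ℚ (fun c : {x // x ∈ C} => intQ c.val) :=
    linearIndepOn_finset_of_forall_exists_dual fun _ hD hne => (hC.subset hD).exists_dual hQ hne
  exact ⟨hli, by simpa using hli.fintype_card_le_finrank⟩

end General

/-- Every compatible subset of `Ψ(Q)_{≥ −1}` is linearly independent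
over `ℚ`; in particular it has at most `|Q_0|` elements. -/
theorem stmt9 [IsAlgClosed K] [CharZero K] (t h : A → V) (hQ : Acyclic t h)
    (C : Finset (V → ℤ)) (hC : IsCompatible K t h C) :
    LinearIndependent ℚ (fun c : {x // x ∈ C} => intQ c.val) ∧
    C.card ≤ Fintype.card V := by
  have : Infinite K := CharZero.infinite K
  exact stmt9_general t h hQ C hC

end
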